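/- Let v > 0 and a > 0, and define δ(r) := (φ(r - v)/φ(r))·Φ(r) - Φ(r - v) for r ∈ ℝ. Then there exists a unique r* ∈ ℝ with δ(r*) = a, and: (i) if a ≤ √(π/2)·φ(v) + Φ(v) - 1, then -√(-2·log((a/v)·√(2π))) < r* ≤ 0; (ii) if √(π/2)·φ(v) + Φ(v) - 1 < a ≤ (1/√(2π))·(Φ(v)/φ(v)) - 1/2, then 0 < r* ≤ v; (iii) if a > (1/√(2π))·(Φ(v)/φ(v)) - 1/2, then v < r* < (1/2)·(v + (2/v)·log(2a + 1)). -/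

import Mathlib

open MeasureTheory

/-- The standard normal probability density function. -/
noncomputable def phi (x : ℝ) : ℝ := Real.exp (-x ^ 2 / 2) / Real.sqrt (2 * Real.pi)

/-- The standard normal cumulative distribution function. -/
noncomputable def Phi (x : ℝ) : ℝ := ∫ t in Set.Iic x, phi t

/-- `δ(r) = (φ(r - v)/φ(r))·Φ(r) - Φ(r - v)` in the Black-Scholes case. -/
noncomputable def deltaBS (v r : ℝ) : ℝ := phi (r - v) / phi r * Phi r - Phi (r - v)


lemma sqrt_two_pi_pos : 0 < Real.sqrt (2 * Real.pi) := Real.sqrt_pos.2 (by positivity)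

lemma phi_pos (x : ℝ) : 0 < phi x := div_pos (Real.exp_pos _) sqrt_two_pi_pos

lemma phi_cont : Continuous phi := by unfold phi; fun_prop

lemma phi_eq : phi = fun x => Real.exp (-(1 / 2) * x ^ 2) / Real.sqrt (2 * Real.pi) := by
  funext x; unfold phi; congr 2; ring

lemma phi_int : Integrable phi := by
  rw [phi_eq]; exact (integrable_exp_neg_mul_sq (by norm_num)).div_const _

lemma phi_total : ∫ x, phi x = 1 := by
  rw [phi_eq, integral_div, integral_gaussian]
  rw [show Real.pi / (1 / 2) = 2 * Real.pi by ring]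
  exact div_self sqrt_two_pi_pos.ne'

lemma phi_neg (x : ℝ) : phi (-x) = phi x := by unfold phi; simp

lemma Phi_deriv (x : ℝ) : HasDerivAt Phi (phi x) x := by
  have h : Phi = fun x => Phi 0 + ∫ t in (0:ℝ)..x, phi t := by
    funext y
    have := intervalIntegral.integral_Iic_sub_Iic (f := phi) (μ := volume) (a := 0) (b := y)
      phi_int.integrableOn phi_int.integrableOn
    unfold Phi
    linarith
  rw [h]
  exact (intervalIntegral.integral_hasDerivAt_right (phi_cont.intervalIntegrable _ _)
    (phi_cont.stronglyMeasurableAtFilter _ _) phi_cont.continuousAt).const_add _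

lemma Phi_strictMono : StrictMono Phi :=
  strictMono_of_hasDerivAt_pos Phi_deriv phi_pos

lemma Phi_symm (x : ℝ) : Phi (-x) = 1 - Phi x := by
  have h1 : Phi (-x) = ∫ t in Set.Ioi x, phi t := by
    unfold Phi
    rw [← integral_comp_neg_Ioi]
    simp only [phi_neg]
  have h2 := intervalIntegral.integral_Iic_add_Ioi (f := phi) (μ := volume) (b := x)
    phi_int.integrableOn phi_int.integrableOn
  rw [phi_total] at h2
  rw [h1]; unfold Phi; linarith

lemma Phi_zero : Phi 0 = 1 / 2 := by
  have := Phi_symm 0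
  rw [neg_zero] at this; linarith

lemma Phi_pos (x : ℝ) : 0 < Phi x := by
  have h0 : 0 ≤ Phi (x - 1) := integral_nonneg fun t => (phi_pos t).le
  have h1 : Phi (x - 1) < Phi x := Phi_strictMono (by linarith)
  linarith

lemma Phi_lt_one (x : ℝ) : Phi x < 1 := by
  have := Phi_symm x
  have := Phi_pos (-x)
  linarith

lemma phi_ratio (v r : ℝ) : phi (r - v) = Real.exp (r * v - v ^ 2 / 2) * phi r := by
  unfold phi
  rw [← mul_div_assoc, ← Real.exp_add]
  congr 2; ring

lemma delta_eq (v r : ℝ) :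
    deltaBS v r = Real.exp (r * v - v ^ 2 / 2) * Phi r - Phi (r - v) := by
  unfold deltaBS
  rw [phi_ratio, mul_div_assoc, div_self (phi_pos r).ne', mul_one]

lemma delta_deriv (v r : ℝ) :
    HasDerivAt (deltaBS v) (v * Real.exp (r * v - v ^ 2 / 2) * Phi r) r := by
  have h : deltaBS v = fun r => Real.exp (r * v - v ^ 2 / 2) * Phi r - Phi (r - v) :=
    funext (delta_eq v)
  rw [h]
  have h1 : HasDerivAt (fun r : ℝ => r * v - v ^ 2 / 2) v r := by
    simpa using ((hasDerivAt_id r).mul_const v).sub_const (v ^ 2 / 2)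
  have h2 : HasDerivAt (fun r : ℝ => Phi (r - v)) (phi (r - v)) r := by
    simpa using (Phi_deriv (r - v)).comp_sub_const r v
  refine ((h1.exp.mul (Phi_deriv r)).sub h2).congr_deriv ?_
  rw [phi_ratio]; ring

lemma delta_mono (v : ℝ) (hv : 0 < v) : StrictMono (deltaBS v) :=
  strictMono_of_hasDerivAt_pos (delta_deriv v) fun r =>
    mul_pos (mul_pos hv (Real.exp_pos _)) (Phi_pos r)

lemma delta_lt (v r : ℝ) (hv : 0 < v) (hr : r ≤ 0) : deltaBS v r < v * phi r := by
  have hd : ∀ w : ℝ, HasDerivAt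
      (fun w => w * phi r + Phi (r - w) - Real.exp (r * w - w ^ 2 / 2) * Phi r)
      (phi r - phi (r - w) - (r - w) * Real.exp (r * w - w ^ 2 / 2) * Phi r) w := by
    intro w
    have h1 : HasDerivAt (fun w : ℝ => r * w - w ^ 2 / 2) (r - w) w := by
      refine (((hasDerivAt_id w).const_mul r).sub
        (((hasDerivAt_id w).pow 2).div_const 2)).congr_deriv ?_
      simp
    have h2 : HasDerivAt (fun w : ℝ => Phi (r - w)) (-phi (r - w)) w := by
      simpa using (Phi_deriv (r - w)).comp_const_sub r w
    refine ((((hasDerivAt_id w).mul_const (phi r)).add h2).sub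
      (h1.exp.mul_const (Phi r))).congr_deriv ?_
    ring
  have hm : StrictMonoOn
      (fun w => w * phi r + Phi (r - w) - Real.exp (r * w - w ^ 2 / 2) * Phi r)
      (Set.Ici 0) := by
    refine strictMonoOn_of_deriv_pos (convex_Ici 0)
      (fun w _ => (hd w).continuousAt.continuousWithinAt) fun w hw => ?_
    rw [interior_Ici, Set.mem_Ioi] at hw
    rw [(hd w).deriv]
    have h1 : phi (r - w) < phi r := by
      rw [phi_ratio]
      have : Real.exp (r * w - w ^ 2 / 2) < 1 := Real.exp_lt_one_iff.2 (by nlinarith)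
      nlinarith [phi_pos r]
    have h2 : 0 < (w - r) * Real.exp (r * w - w ^ 2 / 2) * Phi r :=
      mul_pos (mul_pos (by linarith) (Real.exp_pos _)) (Phi_pos r)
    linarith
  have := hm (Set.mem_Ici.2 le_rfl) (Set.mem_Ici.2 hv.le) hv
  simp at this
  rw [delta_eq]; linarith

lemma delta_zero (v : ℝ) : deltaBS v 0 = Real.sqrt (Real.pi / 2) * phi v + Phi v - 1 := by
  have h : Real.sqrt (2 * Real.pi) = 2 * Real.sqrt (Real.pi / 2) := by
    rw [show 2 * Real.pi = 2 ^ 2 * (Real.pi / 2) by ring, Real.sqrt_mul (by norm_num),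
      Real.sqrt_sq (by norm_num)]
  have hp : Real.sqrt (Real.pi / 2) ≠ 0 := (Real.sqrt_pos.2 (by positivity)).ne'
  rw [delta_eq, Phi_zero, zero_sub, Phi_symm]
  unfold phi
  rw [h, show (0 * v - v ^ 2 / 2 : ℝ) = -v ^ 2 / 2 by ring]
  field_simp
  ring

lemma delta_self (v : ℝ) :
    deltaBS v v = 1 / Real.sqrt (2 * Real.pi) * (Phi v / phi v) - 1 / 2 := by
  have := phi_pos v
  have h0 : phi 0 = 1 / Real.sqrt (2 * Real.pi) := by simp [phi]
  unfold deltaBS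
  rw [sub_self, Phi_zero, h0]
  ring

lemma delta_exists (v a : ℝ) (hv : 0 < v) (ha : 0 < a) : ∃ r, deltaBS v r = a := by
  have hc : Continuous (deltaBS v) :=
    continuous_iff_continuousAt.2 fun r => (delta_deriv v r).continuousAt
  have h1 : deltaBS v ((Real.log a + v ^ 2 / 2) / v) ≤ a := by
    rw [delta_eq, div_mul_cancel₀ _ hv.ne', add_sub_cancel_right, Real.exp_log ha]
    nlinarith [Phi_pos ((Real.log a + v ^ 2 / 2) / v - v),
      Phi_lt_one ((Real.log a + v ^ 2 / 2) / v)]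
  have h2 : ∃ r, a ≤ deltaBS v r := by
    refine ⟨(Real.log (2 * a + 2) + v ^ 2 / 2) / v, ?_⟩
    have hl : 0 < Real.log (2 * a + 2) := Real.log_pos (by linarith)
    have hr : 0 < (Real.log (2 * a + 2) + v ^ 2 / 2) / v := by positivity
    have := Phi_strictMono hr
    rw [Phi_zero] at this
    rw [delta_eq, div_mul_cancel₀ _ hv.ne', add_sub_cancel_right, Real.exp_log (by linarith)]
    nlinarith [Phi_lt_one ((Real.log (2 * a + 2) + v ^ 2 / 2) / v - v)]
  obtain ⟨r2, h2⟩ := h2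
  exact mem_range_of_exists_le_of_exists_ge hc ⟨_, h1⟩ ⟨_, h2⟩

/-- Explicit bounds for the minimizer `r*` (the unique solution of `δ(r*) = a`) in the
Black-Scholes case. -/
theorem bs_rstar_bounds (v a : ℝ) (hv : 0 < v) (ha : 0 < a) :
    (∃! r : ℝ, deltaBS v r = a) ∧
    ∀ r : ℝ, deltaBS v r = a →
      ((a ≤ Real.sqrt (Real.pi / 2) * phi v + Phi v - 1 →
          -Real.sqrt (-2 * Real.log (a / v * Real.sqrt (2 * Real.pi))) < r ∧ r ≤ 0) ∧
       ((Real.sqrt (Real.pi / 2) * phi v + Phi v - 1 < a ∧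
          a ≤ 1 / Real.sqrt (2 * Real.pi) * (Phi v / phi v) - 1 / 2) →
          0 < r ∧ r ≤ v) ∧
       (1 / Real.sqrt (2 * Real.pi) * (Phi v / phi v) - 1 / 2 < a →
          v < r ∧ r < 1 / 2 * (v + 2 / v * Real.log (2 * a + 1)))) := by
  have hm := delta_mono v hv
  refine ⟨?_, ?_⟩
  · obtain ⟨r, hr⟩ := delta_exists v a hv ha
    exact ⟨r, hr, fun s hs => hm.injective (hs.trans hr.symm)⟩
  intro r hr
  rw [← delta_zero, ← delta_self]
  refine ⟨fun h => ?_, fun h => ?_, fun h => ?_⟩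
  · rw [← hr] at h
    have hr0 : r ≤ 0 := hm.le_iff_le.1 h
    refine ⟨?_, hr0⟩
    have h1 := delta_lt v r hv hr0
    rw [hr] at h1
    have h2 : a / v * Real.sqrt (2 * Real.pi) < Real.exp (-r ^ 2 / 2) := by
      have : phi r * Real.sqrt (2 * Real.pi) = Real.exp (-r ^ 2 / 2) :=
        div_mul_cancel₀ _ sqrt_two_pi_pos.ne'
      rw [← this]
      refine mul_lt_mul_of_pos_right ?_ sqrt_two_pi_pos
      rw [div_lt_iff₀ hv]; linarith
    have h3 : 0 < a / v * Real.sqrt (2 * Real.pi) := mul_pos (div_pos ha hv) sqrt_two_pi_pos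
    have h4 := (Real.log_lt_iff_lt_exp h3).2 h2
    have h5 : -r < Real.sqrt (-2 * Real.log (a / v * Real.sqrt (2 * Real.pi))) := by
      apply Real.lt_sqrt_of_sq_lt
      nlinarith
    linarith
  · rw [← hr] at h
    exact ⟨hm.lt_iff_lt.1 h.1, hm.le_iff_le.1 h.2⟩
  · rw [← hr] at h
    have hvr : v < r := hm.lt_iff_lt.1 h
    refine ⟨hvr, ?_⟩
    have hE : 1 < Real.exp (r * v - v ^ 2 / 2) := Real.one_lt_exp_iff.2 (by nlinarith)
    have h1 : Phi (r - v) < Phi r := Phi_strictMono (by linarith)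
    have h2 : Phi 0 < Phi (r - v) := Phi_strictMono (by linarith)
    rw [Phi_zero] at h2
    rw [delta_eq] at hr
    have h3 : Real.exp (r * v - v ^ 2 / 2) < 2 * a + 1 := by nlinarith
    have h4 := (Real.lt_log_iff_exp_lt (by linarith)).2 h3
    have h5 : r - v / 2 < Real.log (2 * a + 1) / v := by
      rw [lt_div_iff₀ hv]; linarith
    have h6 : 1 / 2 * (v + 2 / v * Real.log (2 * a + 1)) = v / 2 + Real.log (2 * a + 1) / v := by
      ring
    rw [h6]; linarith
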